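/- Let α ∈ ℝ, β ∈ ℝ, δ > 0, and let w : ℂ → ℂ be continuous and bounded on the vertical segment {α + iu : 0 ≤ u ≤ δ}. Then lim_{s → +∞} (s²/2)^{1+iβ} · ∫₀^δ e^{−s² u / 2}·u^{iβ}·w(α + iu) du = Γ(1 + iβ)·w(α), where for r > 0 and real β, r^{iβ} = e^{iβ·log r}, and Γ is the complex Gamma function. -/

import Mathlib

open Complex Filter

/-!
In terms of the Mellin transform the scaled integral is `r ^ a • mellin (e^{-r·} • f) a`, where
`r = s² / 2`, `a = 1 + iβ` and `f` is `u ↦ w (α + iu)` truncated to `(0, δ]`. Substituting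
`t = r * u` turns it into `mellin (e^{-·} • f (· / r)) a`. As `r → ∞` the function `f (· / r)` tends
pointwise to the limit of `f` at `0⁺` and stays bounded, so dominated convergence yields
`mellin (e^{-·}) a = Γ(a)` times that limit.
-/

open MeasureTheory Set Topology
open scoped ENNReal

lemma memLp_top_restrict_of_continuousOn_isCompact {X F : Type*} [TopologicalSpace X]
    [MeasurableSpace X] [OpensMeasurableSpace X] [TopologicalSpace.PseudoMetrizableSpace X]
    [NormedAddCommGroup F] {μ : Measure X} {f : X → F} {K : Set X}
    (hK : IsCompact K) (hKm : MeasurableSet K) (hf : ContinuousOn f K) :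
    MemLp f ∞ (μ.restrict K) := by
  obtain ⟨C, hC⟩ := hK.exists_bound_of_continuousOn hf
  exact memLp_top_of_bound (hf.aestronglyMeasurable_of_isCompact hK hKm) C
    (ae_restrict_of_forall_mem hKm hC)

lemma quasiMeasurePreserving_div_const_Ioi {r : ℝ} (hr : 0 < r) :
    Measure.QuasiMeasurePreserving (fun t : ℝ ↦ t / r)
      (volume.restrict (Ioi 0)) (volume.restrict (Ioi 0)) := by
  have hdiv : Measure.QuasiMeasurePreserving (fun t : ℝ ↦ t / r) volume volume := by
    simpa only [smul_eq_mul, inv_mul_eq_div] using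
      Measure.quasiMeasurePreserving_smul (volume : Measure ℝ) (inv_ne_zero hr.ne')
  exact hdiv.restrict fun t ht ↦ div_pos ht hr

lemma tendsto_const_div_atTop_nhdsGT_zero {𝕜 : Type*} [Field 𝕜] [LinearOrder 𝕜]
    [IsStrictOrderedRing 𝕜] [TopologicalSpace 𝕜] [OrderTopology 𝕜] {t : 𝕜} (ht : 0 < t) :
    Tendsto (fun r : 𝕜 ↦ t / r) atTop (𝓝[>] 0) :=
  tendsto_nhdsWithin_iff.2 ⟨tendsto_const_nhds.div_atTop tendsto_id,
    (eventually_gt_atTop 0).mono fun _ hr ↦ div_pos ht hr⟩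

section MellinScaling

variable {E : Type*} [NormedAddCommGroup E] [NormedSpace ℂ E]

lemma cpow_smul_mellin_comp_mul_left_smul (k : ℝ → ℂ) (f : ℝ → E) (a : ℂ) {r : ℝ} (hr : 0 < r) :
    (r : ℂ) ^ a • mellin (fun u ↦ k (r * u) • f u) a = mellin (fun t ↦ k t • f (t / r)) a := by
  have hra : (r : ℂ) ^ a ≠ 0 := cpow_ne_zero_iff.2 (.inl (ofReal_ne_zero.2 hr.ne'))
  have hscale := mellin_comp_mul_left (fun t ↦ k t • f (t / r)) a hr
  simp only [mul_div_cancel_left₀ _ hr.ne'] at hscale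
  rw [hscale, cpow_neg, smul_inv_smul₀ hra]

variable [CompleteSpace E] {f : ℝ → E} {a : ℂ} {L : E}

lemma tendsto_mellin_smul_comp_div {k : ℝ → ℂ} (hk : MellinConvergent k a)
    (hf : MemLp f ∞ (volume.restrict (Ioi 0))) (hL : Tendsto f (𝓝[>] 0) (𝓝 L)) :
    Tendsto (fun r : ℝ ↦ mellin (fun t ↦ k t • f (t / r)) a) atTop (𝓝 (mellin k a • L)) := by
  have hlim : mellin k a • L = ∫ t : ℝ in Ioi 0, ((t : ℂ) ^ (a - 1) • k t) • L :=
    (integral_smul_const _ _).symm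
  rw [hlim]
  simp only [mellin, ← smul_assoc]
  refine tendsto_integral_filter_of_dominated_convergence
    (fun t : ℝ ↦ ‖(t : ℂ) ^ (a - 1) • k t‖ * lpNorm f ∞ (volume.restrict (Ioi 0))) ?_ ?_
    (hk.norm.mul_const _) ?_
  · filter_upwards [eventually_gt_atTop 0] with r hr
    exact hk.aestronglyMeasurable.smul (hf.aestronglyMeasurable.comp_quasiMeasurePreserving
      (quasiMeasurePreserving_div_const_Ioi hr))
  · filter_upwards [eventually_gt_atTop 0] with r hr
    filter_upwards [(quasiMeasurePreserving_div_const_Ioi hr).ae (ae_le_lpNorm_exponent_top hf)]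
      with t ht
    rw [norm_smul]
    gcongr
  · filter_upwards [ae_restrict_mem measurableSet_Ioi] with t ht
    exact (hL.comp (tendsto_const_div_atTop_nhdsGT_zero ht)).const_smul _

lemma tendsto_cpow_smul_mellin_exp_neg_mul_smul (ha : 0 < a.re)
    (hf : MemLp f ∞ (volume.restrict (Ioi 0))) (hL : Tendsto f (𝓝[>] 0) (𝓝 L)) :
    Tendsto (fun r : ℝ ↦ (r : ℂ) ^ a • mellin (fun u ↦ (Real.exp (-(r * u)) : ℂ) • f u) a)
      atTop (𝓝 (Gamma a • L)) := by
  have hk : MellinConvergent (fun t ↦ (Real.exp (-t) : ℂ)) a :=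
    (GammaIntegral_convergent ha).congr_fun (fun _ _ ↦ mul_comm _ _) measurableSet_Ioi
  rw [Gamma_eq_integral ha, GammaIntegral_eq_mellin]
  refine (tendsto_mellin_smul_comp_div hk hf hL).congr' ?_
  filter_upwards [eventually_gt_atTop 0] with r hr
  exact (cpow_smul_mellin_comp_mul_left_smul _ f a hr).symm

/-- Leading term of Watson's lemma. -/
lemma tendsto_cpow_smul_intervalIntegral_exp_neg_mul_cpow_smul {δ : ℝ} (hδ : 0 < δ)
    (ha : 0 < a.re) (hf : MemLp f ∞ (volume.restrict (Ioc 0 δ))) (hL : Tendsto f (𝓝[>] 0) (𝓝 L)) :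
    Tendsto (fun r : ℝ ↦ (r : ℂ) ^ a •
        ∫ u in (0 : ℝ)..δ, (cexp (-(r * u)) * (u : ℂ) ^ (a - 1)) • f u)
      atTop (𝓝 (Gamma a • L)) := by
  have hg : MemLp ((Ioc 0 δ).indicator f) ∞ (volume.restrict (Ioi 0)) :=
    ((memLp_indicator_iff_restrict measurableSet_Ioc).2 hf).restrict _
  have hgL : Tendsto ((Ioc 0 δ).indicator f) (𝓝[>] 0) (𝓝 L) :=
    hL.congr' <| by
      filter_upwards [Ioc_mem_nhdsGT hδ] with u hu
      rw [indicator_of_mem hu]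
  refine (tendsto_cpow_smul_mellin_exp_neg_mul_smul ha hg hgL).congr fun r ↦ ?_
  have hind (u : ℝ) : (u : ℂ) ^ (a - 1) • (Real.exp (-(r * u)) : ℂ) • (Ioc 0 δ).indicator f u =
      (Ioc 0 δ).indicator (fun u ↦ (cexp (-(r * u)) * (u : ℂ) ^ (a - 1)) • f u) u := by
    by_cases hu : u ∈ Ioc 0 δ
    · simp only [indicator_of_mem hu, smul_smul, ofReal_exp, ofReal_neg, ofReal_mul, mul_comm]
    · simp only [indicator_of_notMem hu, smul_zero]
  simp only [mellin, hind]
  rw [setIntegral_indicator measurableSet_Ioc, inter_eq_right.2 Ioc_subset_Ioi_self,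
    intervalIntegral.integral_of_le hδ.le]

theorem vertical_segment_asymptotics_log_general {α γ : ℂ} {δ : ℝ} {w : ℂ → E} (hγ : -1 < γ.re)
    (hδ : 0 < δ) (hw : MemLp (fun u : ℝ ↦ w (α + I * u)) ∞ (volume.restrict (Ioc 0 δ)))
    (hL : Tendsto (fun u : ℝ ↦ w (α + I * u)) (𝓝[>] 0) (𝓝 L)) :
    Tendsto (fun s : ℝ ↦ ((s ^ 2 / 2 : ℝ) : ℂ) ^ (1 + γ) •
        ∫ u in (0 : ℝ)..δ, (cexp (-(s : ℂ) ^ 2 * u / 2) * (u : ℂ) ^ γ) • w (α + I * u))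
      atTop (𝓝 (Gamma (1 + γ) • L)) := by
  have hre : 0 < (1 + γ).re := by
    rw [add_re, one_re]
    linarith
  have hs : Tendsto (fun s : ℝ ↦ s ^ 2 / 2) atTop atTop :=
    (tendsto_pow_atTop two_ne_zero).atTop_div_const two_pos
  have hexp (s u : ℝ) : -(((s ^ 2 / 2 : ℝ) : ℂ) * u) = -(s : ℂ) ^ 2 * u / 2 := by
    push_cast
    ring
  simpa only [Function.comp_def, add_sub_cancel_left, hexp] using
    (tendsto_cpow_smul_intervalIntegral_exp_neg_mul_cpow_smul hδ hre hw hL).comp hs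

end MellinScaling

/-- Asymptotics of the vertical-segment contribution near the branch point:
`(s²/2)^{1+iβ} ∫₀^δ e^{−s²u/2} u^{iβ} w(α+iu) du → Γ(1+iβ)·w(α)` as `s → +∞`. -/
theorem vertical_segment_asymptotics_log
    (α β δ : ℝ) (hδ : 0 < δ) (w : ℂ → ℂ)
    (hw : ContinuousOn w {c : ℂ | ∃ u ∈ Set.Icc (0 : ℝ) δ, c = (α : ℂ) + Complex.I * u})
    (hbdd : ∃ M : ℝ, ∀ c ∈ {c : ℂ | ∃ u ∈ Set.Icc (0 : ℝ) δ, c = (α : ℂ) + Complex.I * u},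
      ‖w c‖ ≤ M) :
    Tendsto (fun s : ℝ =>
        ((s ^ 2 / 2 : ℝ) : ℂ) ^ ((1 : ℂ) + Complex.I * (β : ℂ)) *
          ∫ u in (0:ℝ)..δ, Complex.exp (-(s : ℂ) ^ 2 * (u : ℂ) / 2) *
            (u : ℂ) ^ (Complex.I * (β : ℂ)) * w ((α : ℂ) + Complex.I * u))
      atTop (nhds (Complex.Gamma (1 + Complex.I * (β : ℂ)) * w (α : ℂ))) := by
  have hcont : ContinuousOn (fun u : ℝ ↦ w (α + I * u)) (Icc 0 δ) :=
    hw.comp (by fun_prop) fun u hu ↦ ⟨u, hu, rfl⟩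
  have hmem : MemLp (fun u : ℝ ↦ w (α + I * u)) ∞ (volume.restrict (Ioc 0 δ)) :=
    (memLp_top_restrict_of_continuousOn_isCompact isCompact_Icc measurableSet_Icc
      hcont).mono_measure (Measure.restrict_mono_set _ Ioc_subset_Icc_self)
  have hlim : Tendsto (fun u : ℝ ↦ w (α + I * u)) (𝓝[>] 0) (𝓝 (w α)) := by
    simpa only [ofReal_zero, mul_zero, add_zero] using
      (hcont 0 (left_mem_Icc.2 hδ.le)).mono_left (nhdsWithin_le_of_mem (Icc_mem_nhdsGT hδ))
  exact vertical_segment_asymptotics_log_general (by simp) hδ hmem hlim
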